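/- Let $n \geq 1$ and $k \geq 2$ be natural numbers with $k - 1/2 < n$, let $\pi^k_n = \prod_{i=1}^{k-1}(1 - i/n)$, let $\beta^k_n = 1 - \pi^k_n$, and let $\mathfrak{p}(k-1,m) = \sum_{i=1}^{k-1} i^m$. For a natural number $N \geq 2$, set $l_N(k,n) = \sum_{m=1}^{N-1} \frac{\mathfrak{p}(k-1,m)}{m n^m}$ and $u_N(k,n) = l_N(k,n) + \frac{(k-\frac12)^{N+1}}{N(N+1)\left(1-\frac{k-1/2}{n}\right)n^N}$, and assume $u_N(k,n) < 1$. Then for every odd natural number $M$, $-\sum_{m=1}^{M+1} \frac{(-l_N(k,n))^m}{m!} < \beta^k_n < -\sum_{m=1}^{M} \frac{(-u_N(k,n))^m}{m!}$. -/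

import Mathlib

lemma aux_pow (x : ℝ) (hx : 1/2 ≤ x) (m : ℕ) :
    2 * x^m ≤ (x+1/2)^m + (x-1/2)^m ∧ (m+1) * x^m ≤ (x+1/2)^(m+1) - (x-1/2)^(m+1) := by
  induction m with
  | zero => norm_num
  | succ m ih =>
    obtain ⟨h1, h2⟩ := ih
    have hx0 : 0 ≤ x := by linarith
    have hAB : (x-1/2)^m ≤ (x+1/2)^m := by gcongr <;> linarith
    have h1x := mul_le_mul_of_nonneg_left h1 hx0
    have h3 : 2 * x^(m+1) ≤ (x+1/2)^(m+1) + (x-1/2)^(m+1) := by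
      simp only [pow_succ] at *
      nlinarith
    refine ⟨h3, ?_⟩
    have h2x := mul_le_mul_of_nonneg_left h2 hx0
    rw [pow_succ (x+1/2) (m+1), pow_succ (x-1/2) (m+1)]
    push_cast
    have : x * ((m+1) * x^m) = (m+1) * x^(m+1) := by ring
    nlinarith

lemma aux_psum (j m : ℕ) :
    ∑ i ∈ Finset.Icc 1 j, (i:ℝ)^m ≤ ((j:ℝ)+1/2)^(m+1) / (m+1) := by
  induction j with
  | zero => simp; positivity
  | succ j ih =>
    rw [Finset.sum_Icc_succ_top (by omega)]
    have h := (aux_pow ((j:ℝ)+1) (by have : (0:ℝ) ≤ j := by positivity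
                                     linarith) m).2
    have hm : (0:ℝ) < m+1 := by positivity
    rw [le_div_iff₀ hm] at *
    push_cast
    have e1 : (j:ℝ)+1-1/2 = j+1/2 := by ring
    rw [e1] at h
    nlinarith

lemma aux_sum (x : ℝ) (M : ℕ) : ∑ m ∈ Finset.Icc 1 M, (-x)^m / (Nat.factorial m : ℝ)
    = ∑ m ∈ Finset.range (M+1), (-1)^m * (x^m / (Nat.factorial m : ℝ)) - 1 := by
  induction M with
  | zero => simp
  | succ M ih =>
    rw [Finset.sum_Icc_succ_top (by omega), Finset.sum_range_succ, ih, neg_pow]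
    ring

lemma aux_anti (x : ℝ) (h0 : 0 ≤ x) (h1 : x ≤ 1) :
    Antitone (fun m : ℕ => x^m / (Nat.factorial m : ℝ)) := by
  intro a b hab
  simp only
  have := Nat.factorial_le hab
  have h2 := pow_le_pow_of_le_one h0 h1 hab
  gcongr

lemma aux_tend (x : ℝ) : Filter.Tendsto
    (fun M => ∑ m ∈ Finset.range M, (-1)^m * (x^m / (Nat.factorial m : ℝ))) Filter.atTop
    (nhds (Real.exp (-x))) := by
  have h := NormedSpace.expSeries_div_hasSum_exp (-x)
  rw [← Real.exp_eq_exp_ℝ] at h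
  refine h.tendsto_sum_nat.congr fun M => Finset.sum_congr rfl fun m _ => ?_
  rw [neg_pow]; ring

lemma aux_log (n k N : ℕ) (hn : 1 ≤ n) (hk : 2 ≤ k)
    (hkn : (k : ℝ) - 1/2 < n) (hN : 2 ≤ N) (l u : ℝ)
    (hl : l = ∑ m ∈ Finset.Icc 1 (N-1),
        (∑ i ∈ Finset.Icc 1 (k-1), (i : ℝ)^m) / (m * (n : ℝ)^m))
    (hu : u = l + ((k : ℝ) - 1/2)^(N+1) / (N * (N+1) * (1 - ((k : ℝ) - 1/2)/n) * (n : ℝ)^N)) :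
    ∃ L : ℝ, ∏ i ∈ Finset.Icc 1 (k-1), (1 - (i : ℝ)/n) = Real.exp (-L) ∧ 0 ≤ l ∧ l < L ∧ L < u := by
  obtain ⟨j, rfl⟩ : ∃ j, k = j + 2 := ⟨k-2, by omega⟩
  obtain ⟨P, rfl⟩ : ∃ P, N = P + 1 := ⟨N-1, by omega⟩
  have hn0 : (0:ℝ) < n := by positivity
  set c : ℝ := ((j+2:ℕ):ℝ) - 1/2 with hc
  have hc' : c = ((j+1:ℕ):ℝ) + 1/2 := by rw [hc]; push_cast; ring
  have hc0 : 0 < c := by rw [hc']; positivity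
  have hr1 : c / n < 1 := by rw [div_lt_one hn0]; exact hkn
  have hr0 : 0 < c / n := by positivity
  simp only [show j + 2 - 1 = j + 1 by omega, Nat.add_sub_cancel] at *
  have hi : ∀ i ∈ Finset.Icc 1 (j+1), 0 < (i:ℝ)/n ∧ (i:ℝ)/n < 1 := by
    intro i hi
    rw [Finset.mem_Icc] at hi
    have h1 : (1:ℝ) ≤ i := by exact_mod_cast hi.1
    have h2 : (i:ℝ) ≤ (j+1:ℕ) := by exact_mod_cast hi.2
    refine ⟨by positivity, ?_⟩
    rw [div_lt_one hn0]; linarith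
  let f : ℕ → ℝ := fun m => ∑ i ∈ Finset.Icc 1 (j+1), ((i:ℝ)/n)^(m+1)/((m:ℝ)+1)
  have hf : ∀ m, f m = (∑ i ∈ Finset.Icc 1 (j+1), (i : ℝ)^(m+1)) / (((m+1:ℕ):ℝ) * (n : ℝ)^(m+1)) := by
    intro m
    simp only [f]
    rw [Finset.sum_div]
    refine Finset.sum_congr rfl fun i _ => ?_
    rw [div_pow]; push_cast; field_simp
  have hfpos : ∀ m, 0 < f m := by
    intro m
    refine Finset.sum_pos (fun i h => ?_) ⟨1, by simp⟩
    have := (hi i h).1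
    positivity
  have hS : HasSum f (∑ i ∈ Finset.Icc 1 (j+1), -Real.log (1 - (i:ℝ)/n)) := by
    refine hasSum_sum fun i h => ?_
    refine Real.hasSum_pow_div_log_of_abs_lt_one ?_
    rw [abs_of_pos (hi i h).1]; exact (hi i h).2
  have hl' : l = ∑ m ∈ Finset.range P, f m := by
    rw [hl, Finset.range_eq_Ico, Finset.sum_congr rfl (fun m _ => hf m),
      Finset.sum_Ico_add' (fun m : ℕ => (∑ i ∈ Finset.Icc 1 (j+1), (i : ℝ)^m) / ((m:ℝ) * (n : ℝ)^m)) 0 P 1]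
    rfl
  refine ⟨∑ i ∈ Finset.Icc 1 (j+1), -Real.log (1 - (i:ℝ)/n), ?_, ?_, ?_, ?_⟩
  · rw [← Finset.sum_neg_distrib, Real.exp_sum]
    refine Finset.prod_congr rfl fun i h => ?_
    rw [neg_neg, Real.exp_log]
    linarith [(hi i h).2]
  · rw [hl']; exact Finset.sum_nonneg fun m _ => (hfpos m).le
  · have h1 := sum_le_hasSum (Finset.range (P+1)) (fun m _ => (hfpos m).le) hS
    rw [Finset.sum_range_succ, ← hl'] at h1
    linarith [hfpos P]
  · set L := ∑ i ∈ Finset.Icc 1 (j+1), -Real.log (1 - (i:ℝ)/n)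
    have hT : HasSum (fun m => f (m + P)) (L - l) := by
      rw [hl']; exact (hasSum_nat_add_iff' P).2 hS
    set C : ℝ := c^(P+2) / ((P+1:ℝ) * (P+2) * (n:ℝ)^(P+1)) with hC
    have hCpos : 0 < C := by positivity
    have hG : HasSum (fun m : ℕ => C * (c/n)^m) (C * (1 - c/n)⁻¹) :=
      (hasSum_geometric_of_lt_one hr0.le hr1).mul_left C
    have hb : ∀ m : ℕ, f (m+P) ≤ c^(m+P+2) / (((m+P+1:ℝ)) * (m+P+2) * (n:ℝ)^(m+P+1)) := by
      intro m
      rw [hf]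
      have h := aux_psum (j+1) (m+P+1)
      rw [← hc'] at h
      calc _ ≤ (c^(m+P+1+1) / (((m+P+1:ℕ):ℝ)+1)) / (((m+P+1:ℕ):ℝ) * (n:ℝ)^(m+P+1)) := by gcongr
        _ = _ := by
          rw [div_div]; push_cast; congr 1; ring
    have hg : ∀ m : ℕ, C * (c/n)^m = c^(m+P+2) / (((P+1:ℝ)) * (P+2) * (n:ℝ)^(m+P+1)) := by
      intro m
      rw [hC, div_pow, div_mul_div_comm]; congr 1 <;> ring
    have hm0 : ∀ m : ℕ, (0:ℝ) ≤ m := fun m => by positivity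
    have hlt : L - l < C * (1 - c/n)⁻¹ := by
      refine hasSum_lt (i := 1) (fun m => ?_) ?_ hT hG
      · refine (hb m).trans ?_
        simp only [hg]
        have := hm0 m
        gcongr <;> linarith
      · refine (hb 1).trans_lt ?_
        simp only [hg]
        have h1 : (P+1:ℝ) * (P+2) < (((1:ℕ):ℝ)+P+1) * (((1:ℕ):ℝ)+P+2) := by
          push_cast
          nlinarith [hm0 P]
        gcongr
    have : c^(P+1+1) / (((P+1:ℕ):ℝ) * (((P+1:ℕ):ℝ)+1) * (1 - c/n) * (n:ℝ)^(P+1)) = C * (1 - c/n)⁻¹ := by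
      rw [hC, ← div_eq_mul_inv, div_div]; push_cast; congr 1; ring
    rw [hu, this]
    linarith

/-- Corollary 4: bounds on the birthday surprise probability `β^k_n` obtained from the
lower and upper bounds `l_N`, `u_N` on `-ln(π^k_n)`. -/
theorem birthday_prob_bounds (n k N : ℕ) (hn : 1 ≤ n) (hk : 2 ≤ k)
    (hkn : (k : ℝ) - 1/2 < n) (hN : 2 ≤ N) (l u : ℝ)
    (hl : l = ∑ m ∈ Finset.Icc 1 (N-1),
        (∑ i ∈ Finset.Icc 1 (k-1), (i : ℝ)^m) / (m * (n : ℝ)^m))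
    (hu : u = l + ((k : ℝ) - 1/2)^(N+1) / (N * (N+1) * (1 - ((k : ℝ) - 1/2)/n) * (n : ℝ)^N))
    (hu1 : u < 1) (M : ℕ) (hM : Odd M) :
    -(∑ m ∈ Finset.Icc 1 (M+1), (-l)^m / (Nat.factorial m))
      < 1 - ∏ i ∈ Finset.Icc 1 (k-1), (1 - (i : ℝ)/n) ∧
    1 - ∏ i ∈ Finset.Icc 1 (k-1), (1 - (i : ℝ)/n)
      < -(∑ m ∈ Finset.Icc 1 M, (-u)^m / (Nat.factorial m)) := by
  obtain ⟨L, hL, h0, h1, h2⟩ := aux_log n k N hn hk hkn hN l u hl hu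
  obtain ⟨q, rfl⟩ := hM
  rw [hL, aux_sum, aux_sum]
  have e1 : Real.exp (-L) < Real.exp (-l) := Real.exp_lt_exp.2 (by linarith)
  have e2 : Real.exp (-u) < Real.exp (-L) := Real.exp_lt_exp.2 (by linarith)
  have a1 := (aux_anti l h0 (by linarith)).tendsto_le_alternating_series (aux_tend l) (q+1)
  have a2 := (aux_anti u (by linarith) (by linarith)).alternating_series_le_tendsto (aux_tend u) (q+1)
  rw [show 2 * (q+1) + 1 = 2*q+1+1+1 by ring] at a1
  rw [show 2 * (q+1) = 2*q+1+1 by ring] at a2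
  constructor <;> linarith
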